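/- In the minimalistic affine super Yangian Y_ℏ(ŝl(m|n,Π)) with recursively defined higher generators: if α_i is an odd simple root and α_j is a simple root with (α_i, α_j) ≠ 0, then [h_{α_j,2}, h_{α_j,1}] = 0; likewise [h_{α_i,2}, h_{α_i,1}] = 0 holds for every even simple root α_i. -/

import Mathlib

/-!
Common framework for formalizing statements about affine super Yangians
`Y_ℏ(ŝl(m|n,Π))` attached to a simple root system `Π` of the affine
Kac–Moody superalgebra `ŝl(m|n)` of type `A^{(1)}(m−1|n−1)`.
-/

noncomputable section

namespace ASY

open scoped TensorProduct

/-- The ground ring `ℂ[ℏ]`. -/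
abbrev R : Type := Polynomial ℂ

/-- The formal deformation parameter `ℏ`. -/
def hbar : R := Polynomial.X

/-- `1/2` as an element of `ℂ[ℏ]`. -/
def half : R := Polynomial.C (1/2 : ℂ)

/-- The sign `(−1)^{p(a)p(b)}` attached to parities `pa`, `pb`. -/
def sg (pa pb : Bool) : R := if pa && pb then -1 else 1

section SuperOps

variable {Y : Type*} [Ring Y] [Algebra R Y]

/-- The supercommutator `[a,b] = ab − (−1)^{p(a)p(b)} ba` of homogeneous elements of
parities `pa` and `pb`. -/
def sbr (pa pb : Bool) (x y : Y) : Y := x * y - sg pa pb • (y * x)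

/-- The super anticommutator `{a,b} = ab + (−1)^{p(a)p(b)} ba`. -/
def sac (pa pb : Bool) (x y : Y) : Y := x * y + sg pa pb • (y * x)

/-- Iterated super-adjoint action `(ad x)^k y` for `x` of parity `pa` and `y` of parity `pb`. -/
def adN (pa pb : Bool) (x : Y) : ℕ → Y → Y
  | 0, y => y
  | k + 1, y => sbr pa (xor pb (pa && decide (k % 2 = 1))) x (adN pa pb x k y)

/-- Iterated super-bracket `[x₁,[x₂,…,[x_k, y]…]]`, all `xᵢ` of parity `pa`, `y` of parity `pb`. -/
def adSeq (pa pb : Bool) : List Y → Y → Y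
  | [], y => y
  | x :: l, y => sbr pa (xor pb (pa && decide (l.length % 2 = 1))) x (adSeq pa pb l y)

end SuperOps

/-- A simple root system `Π` of the affine Kac–Moody superalgebra `ŝl(m|n)`
(type `A^{(1)}(m−1|n−1)`): a cyclic arrangement of the `m + n` weights
`ε₁,…,ε_m, δ₁,…,δ_n`, recorded by the type of the weight at each position
(`false` = an `ε`-weight of norm `+1`, `true` = a `δ`-weight of norm `−1`);
the simple roots are `α_i = e_i − e_{i+1}` (indices mod `m+n`). -/
structure SimpleRootSystem (m n : ℕ) : Type where
  /-- the type of the weight at each position -/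
  τ : Fin (m + n) → Bool
  /-- there are exactly `n` weights of `δ`-type -/
  card_delta : (Finset.univ.filter fun k => τ k = true).card = n

namespace SimpleRootSystem

variable {m n : ℕ}

/-- The norm `(e_k, e_k) = ±1` of the `k`-th weight. -/
def w (P : SimpleRootSystem m n) (k : Fin (m + n)) : ℤ := if P.τ k then -1 else 1

variable [NeZero (m + n)]

/-- The coefficient of `e_k` in the simple root `α_i = e_i − e_{i+1}`. -/
def coeffα (i k : Fin (m + n)) : ℤ := (if k = i then 1 else 0) - (if k = i + 1 then 1 else 0)

/-- The (symmetric) Cartan matrix `a_{ij} = (α_i, α_j)` of `Π`. -/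
def a (P : SimpleRootSystem m n) (i j : Fin (m + n)) : ℤ :=
  ∑ k, P.w k * coeffα i k * coeffα j k

/-- The parity of the simple root `α_i` (`true` iff `α_i` is odd, iff `a_{ii} = 0`). -/
def par (P : SimpleRootSystem m n) (i : Fin (m + n)) : Bool := P.τ i != P.τ (i + 1)

/-- The reflection `s_{α_i}` on simple root systems: on the weight arrangement it
swaps the weights at positions `i` and `i+1`.  For `α_i` even it preserves `Π`;
for `α_i` odd it is the odd reflection `Π ↦ Π₁`. -/
def reflect (P : SimpleRootSystem m n) (i : Fin (m + n)) : SimpleRootSystem m n where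
  τ := P.τ ∘ Equiv.swap i (i + 1)
  card_delta := by
    have h1 : (Finset.univ.filter fun k => (P.τ ∘ Equiv.swap i (i + 1)) k = true).card
        = (Finset.univ.filter fun k => P.τ k = true).card :=
      Finset.card_equiv (Equiv.swap i (i + 1)) (fun k => by simp)
    rw [h1, P.card_delta]

/-- Applying a word of simple reflections to a simple root system. -/
def applyWord (P : SimpleRootSystem m n) : List (Fin (m + n)) → SimpleRootSystem m n
  | [] => P
  | c :: l => applyWord (P.reflect c) l

/-- The word consists of even reflections at every stage (i.e. it represents an
element of the Weyl group, generated by even reflections). -/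
def IsEvenWord (P : SimpleRootSystem m n) : List (Fin (m + n)) → Prop
  | [] => True
  | c :: l => P.par c = false ∧ IsEvenWord (P.reflect c) l

end SimpleRootSystem

end ASY

namespace ASY

/-- Generators of the minimalistic affine super Yangian: `x^±_{α_i,r}`, `h_{α_i,r}`
with `i ∈ I` and `r ∈ {0,1}`. -/
inductive MGen (N : ℕ) : Type
  | xp (i : Fin N) (r : Fin 2)
  | xm (i : Fin N) (r : Fin 2)
  | h (i : Fin N) (r : Fin 2)

/-- The free algebra on the minimalistic generators. -/
abbrev MFree (m n : ℕ) : Type := FreeAlgebra R (MGen (m + n))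

section MinDefs

variable {m n : ℕ}

/-- `x^+_{α_i,r}` in the free algebra. -/
def MXp (i : Fin (m + n)) (r : Fin 2) : MFree m n := FreeAlgebra.ι R (MGen.xp i r)

/-- `x^−_{α_i,r}` in the free algebra. -/
def MXm (i : Fin (m + n)) (r : Fin 2) : MFree m n := FreeAlgebra.ι R (MGen.xm i r)

/-- `h_{α_i,r}` in the free algebra. -/
def MH (i : Fin (m + n)) (r : Fin 2) : MFree m n := FreeAlgebra.ι R (MGen.h i r)

/-- `h̃_{α_i,1} = h_{α_i,1} − (ℏ/2) h_{α_i,0}²` in the free algebra. -/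
def MHt (i : Fin (m + n)) : MFree m n := MH i 1 - (half * hbar) • (MH i 0 * MH i 0)

variable [NeZero (m + n)]

/-- The defining relations of the minimalistic affine super Yangian `Y_ℏ(ŝl(m|n,Π))`. -/
inductive MRel (P : SimpleRootSystem m n) : MFree m n → MFree m n → Prop
  /-- `[h_{α_i,r}, h_{α_j,s}] = 0` -/
  | hh (i j : Fin (m + n)) (r s : Fin 2) :
      MRel P (sbr false false (MH i r) (MH j s)) 0
  /-- `[x^+_{α_i,0}, x^−_{α_j,0}] = δ_{ij} h_{α_i,0}` -/
  | pm00 (i j : Fin (m + n)) :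
      MRel P (sbr (P.par i) (P.par j) (MXp i 0) (MXm j 0)) (if i = j then MH i 0 else 0)
  /-- `[x^+_{α_i,1}, x^−_{α_j,0}] = δ_{ij} h_{α_i,1}` -/
  | pm10 (i j : Fin (m + n)) :
      MRel P (sbr (P.par i) (P.par j) (MXp i 1) (MXm j 0)) (if i = j then MH i 1 else 0)
  /-- `[x^+_{α_i,0}, x^−_{α_j,1}] = δ_{ij} h_{α_i,1}` -/
  | pm01 (i j : Fin (m + n)) :
      MRel P (sbr (P.par i) (P.par j) (MXp i 0) (MXm j 1)) (if i = j then MH i 1 else 0)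
  /-- `[h_{α_i,0}, x^+_{α_j,r}] = a_{ij} x^+_{α_j,r}` -/
  | hxp (i j : Fin (m + n)) (r : Fin 2) :
      MRel P (sbr false (P.par j) (MH i 0) (MXp j r)) (((P.a i j : ℤ) : R) • MXp j r)
  /-- `[h_{α_i,0}, x^−_{α_j,r}] = −a_{ij} x^−_{α_j,r}` -/
  | hxm (i j : Fin (m + n)) (r : Fin 2) :
      MRel P (sbr false (P.par j) (MH i 0) (MXm j r)) ((-(P.a i j : ℤ) : R) • MXm j r)
  /-- `[x^+_{α_i,1},x^+_{α_j,0}] − [x^+_{α_i,0},x^+_{α_j,1}] = (ℏ a_{ij}/2){x^+_{α_i,0},x^+_{α_j,0}}` -/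
  | mixp (i j : Fin (m + n)) :
      MRel P (sbr (P.par i) (P.par j) (MXp i 1) (MXp j 0)
          - sbr (P.par i) (P.par j) (MXp i 0) (MXp j 1))
        ((half * hbar * ((P.a i j : ℤ) : R)) • sac (P.par i) (P.par j) (MXp i 0) (MXp j 0))
  /-- `[x^−_{α_i,1},x^−_{α_j,0}] − [x^−_{α_i,0},x^−_{α_j,1}] = −(ℏ a_{ij}/2){x^−_{α_i,0},x^−_{α_j,0}}` -/
  | mixm (i j : Fin (m + n)) :
      MRel P (sbr (P.par i) (P.par j) (MXm i 1) (MXm j 0)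
          - sbr (P.par i) (P.par j) (MXm i 0) (MXm j 1))
        ((-(half * hbar * ((P.a i j : ℤ) : R))) • sac (P.par i) (P.par j) (MXm i 0) (MXm j 0))
  /-- `[h̃_{α_i,1}, x^+_{α_j,0}] = a_{ij} x^+_{α_j,1}` -/
  | htxp (i j : Fin (m + n)) :
      MRel P (sbr false (P.par j) (MHt i) (MXp j 0)) (((P.a i j : ℤ) : R) • MXp j 1)
  /-- `[h̃_{α_i,1}, x^−_{α_j,0}] = −a_{ij} x^−_{α_j,1}` -/
  | htxm (i j : Fin (m + n)) :
      MRel P (sbr false (P.par j) (MHt i) (MXm j 0)) ((-(P.a i j : ℤ) : R) • MXm j 1)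
  /-- Serre relation `(ad x^+_{α_i,0})^{1+|a_{ij}|}(x^+_{α_j,0}) = 0`, `i ≠ j` -/
  | serrep (i j : Fin (m + n)) (hij : i ≠ j) :
      MRel P (adN (P.par i) (P.par j) (MXp i 0) (1 + (P.a i j).natAbs) (MXp j 0)) 0
  /-- Serre relation `(ad x^−_{α_i,0})^{1+|a_{ij}|}(x^−_{α_j,0}) = 0`, `i ≠ j` -/
  | serrem (i j : Fin (m + n)) (hij : i ≠ j) :
      MRel P (adN (P.par i) (P.par j) (MXm i 0) (1 + (P.a i j).natAbs) (MXm j 0)) 0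
  /-- `[x^+_{α_t,0}, x^+_{α_t,0}] = 0` for `α_t` odd -/
  | oddp (t : Fin (m + n)) (ht : P.par t = true) :
      MRel P (sbr true true (MXp t 0) (MXp t 0)) 0
  /-- `[x^−_{α_t,0}, x^−_{α_t,0}] = 0` for `α_t` odd -/
  | oddm (t : Fin (m + n)) (ht : P.par t = true) :
      MRel P (sbr true true (MXm t 0) (MXm t 0)) 0
  /-- `[[x^+_{α_{t−1},0},x^+_{α_t,0}],[x^+_{α_t,0},x^+_{α_{t+1},0}]] = 0` for `α_t` odd -/
  | oddSp (t : Fin (m + n)) (ht : P.par t = true) :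
      MRel P (sbr (xor (P.par (t - 1)) true) (xor true (P.par (t + 1)))
        (sbr (P.par (t - 1)) true (MXp (t - 1) 0) (MXp t 0))
        (sbr true (P.par (t + 1)) (MXp t 0) (MXp (t + 1) 0))) 0
  /-- `[[x^−_{α_{t−1},0},x^−_{α_t,0}],[x^−_{α_t,0},x^−_{α_{t+1},0}]] = 0` for `α_t` odd -/
  | oddSm (t : Fin (m + n)) (ht : P.par t = true) :
      MRel P (sbr (xor (P.par (t - 1)) true) (xor true (P.par (t + 1)))
        (sbr (P.par (t - 1)) true (MXm (t - 1) 0) (MXm t 0))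
        (sbr true (P.par (t + 1)) (MXm t 0) (MXm (t + 1) 0))) 0

/-- The minimalistic affine super Yangian `Y_ℏ(ŝl(m|n,Π))`, presented on the
generators `x^±_{α_i,r}`, `h_{α_i,r}` (`r ∈ {0,1}`) by the minimalistic relations. -/
abbrev Ymin (P : SimpleRootSystem m n) : Type := RingQuot (MRel P)

/-- The canonical projection from the free algebra onto `Y_ℏ(ŝl(m|n,Π))`. -/
def mkY (P : SimpleRootSystem m n) : MFree m n →ₐ[R] Ymin P := RingQuot.mkAlgHom R (MRel P)

/-- The generator `x^+_{α_i,r}` of `Y_ℏ(ŝl(m|n,Π))`. -/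
def xgp (P : SimpleRootSystem m n) (i : Fin (m + n)) (r : Fin 2) : Ymin P := mkY P (MXp i r)

/-- The generator `x^−_{α_i,r}` of `Y_ℏ(ŝl(m|n,Π))`. -/
def xgm (P : SimpleRootSystem m n) (i : Fin (m + n)) (r : Fin 2) : Ymin P := mkY P (MXm i r)

/-- The generator `h_{α_i,r}` of `Y_ℏ(ŝl(m|n,Π))`. -/
def hg (P : SimpleRootSystem m n) (i : Fin (m + n)) (r : Fin 2) : Ymin P := mkY P (MH i r)

/-- The element `h̃_{α_i,1} = h_{α_i,1} − (ℏ/2)h_{α_i,0}²` of `Y_ℏ(ŝl(m|n,Π))`. -/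
def htilY (P : SimpleRootSystem m n) (i : Fin (m + n)) : Ymin P := mkY P (MHt i)

/-- The scalar `a_{i+1,i}⁻¹ ∈ ℂ ⊆ ℂ[ℏ]`. -/
def acoef (P : SimpleRootSystem m n) (i : Fin (m + n)) : R :=
  Polynomial.C (((P.a (i + 1) i : ℤ) : ℂ)⁻¹)

/-- The recursively defined higher generators
`x^+_{α_i,r+1} := a_{i+1,i}⁻¹ [h̃_{α_{i+1},1}, x^+_{α_i,r}]` (`r ≥ 1`). -/
def xpn (P : SimpleRootSystem m n) (i : Fin (m + n)) : ℕ → Ymin P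
  | 0 => xgp P i 0
  | 1 => xgp P i 1
  | r + 2 => acoef P i • sbr false (P.par i) (htilY P (i + 1)) (xpn P i (r + 1))

/-- The recursively defined higher generators
`x^−_{α_i,r+1} := −a_{i+1,i}⁻¹ [h̃_{α_{i+1},1}, x^−_{α_i,r}]` (`r ≥ 1`). -/
def xmn (P : SimpleRootSystem m n) (i : Fin (m + n)) : ℕ → Ymin P
  | 0 => xgm P i 0
  | 1 => xgm P i 1
  | r + 2 => (-acoef P i) • sbr false (P.par i) (htilY P (i + 1)) (xmn P i (r + 1))

/-- The recursively defined higher Cartan generators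
`h_{α_i,r+1} := [x^+_{α_i,r+1}, x^−_{α_i,0}]` (`r ≥ 1`). -/
def hcn (P : SimpleRootSystem m n) (i : Fin (m + n)) : ℕ → Ymin P
  | 0 => hg P i 0
  | 1 => hg P i 1
  | r + 2 => sbr (P.par i) (P.par i) (xpn P i (r + 2)) (xmn P i 0)

end MinDefs

end ASY

namespace ASY

/-!
Write `T_k = h̃_{α_k,1}`.  The operators `ad T_k` commute and shift the degree of `x^±_{α_j,s}` with
coefficient `± a_{kj}`, so any relation that holds in degree zero propagates along a shift with
invertible coefficient.  Put `u_{rs} = [x^+_{α_i,r}, x^-_{α_i,s}]`.  Then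
`u_{20} = u_{11} = u_{02} = h_{α_i,2}`, and
`[h_{α_i,2}, h_{α_j,1}] = -a_{ji} D_i` with `D_i = u_{21} - u_{12}`, so it suffices that `D_i = 0`.

Let `j` be a neighbour of `i`.  The diagram is a cycle with at least four nodes, so some node is
joined to `i` but not to `j`, and vice versa; hence the degrees at `i` and at `j` can be shifted
independently.  Bracketing the shifted quadratic relations with `x^∓_{α_i,0}` gives
`[h_{α_i,2}, x^±_{α_j,s}]
  = ±a_{ij} (x^±_{α_j,s+2} + (ℏ/2) ({h_{α_i,0}, x^±_{α_j,s+1}} + {h_{α_i,1}, x^±_{α_j,s}}))`.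
In `[h_{α_i,2}, [x^+_{α_j,1}, x^-_{α_j,0}]]` the anticommutators cancel, and
`[h_{α_i,2}, h_{α_j,1}] = 2 a_{ij} D_j`.  So `D_i = -2 D_j`, by symmetry `D_j = -2 D_i`, and
`3 D_i = 0`.
-/

/-! ### Degree shifts -/

section Shift

variable {K M : Type*} [CommRing K] [AddCommGroup M] [Module K M]

theorem eq_zero_of_shift {D : Module.End K M} {β : K} (hβ : IsUnit β) {f : ℕ → M} (h0 : f 0 = 0)
    (hf : ∀ s, D (f s) = β • f (s + 1)) (s : ℕ) : f s = 0 := by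
  induction s with
  | zero => exact h0
  | succ s ih => rw [← hβ.smul_eq_zero, ← hf, ih, map_zero]

theorem map_eq_smul_add_of_commute {D E : Module.End K M} (hDE : Commute D E) {α β : K}
    (hβ : IsUnit β) {x : ℕ → M} (hD : ∀ s, D (x s) = β • x (s + 1)) {k : ℕ}
    (hE : E (x 0) = α • x k) (s : ℕ) : E (x s) = α • x (s + k) := by
  refine sub_eq_zero.1
    (eq_zero_of_shift (D := D) hβ (f := fun s => E (x s) - α • x (s + k)) ?_ ?_ s)
  · rw [hE, zero_add, sub_self]
  · intro s
    have hDEx : D (E (x s)) = E (D (x s)) := LinearMap.congr_fun hDE.eq (x s)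
    rw [map_sub, hDEx, map_smul, hD, hD, map_smul, smul_sub, smul_comm α, Nat.add_right_comm]

end Shift

/-! ### Twisted commutators -/

section TwistedCommutator

variable {K Y : Type*} [CommRing K] [Ring Y] [Algebra K Y]

/-- The `q`-commutator `x y - q y x` as a bilinear map.  For a sign `q` it is a supercommutator and
`qComm (-q)` is the corresponding super anticommutator. -/
def qComm (q : K) : Y →ₗ[K] Y →ₗ[K] Y := LinearMap.mul K Y - q • (LinearMap.mul K Y).flip

variable (K) in
/-- The commutator `[x, y]` as a bilinear map. -/
abbrev ad : Y →ₗ[K] Y →ₗ[K] Y := qComm (1 : K)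

variable (K) in
/-- The anticommutator `{x, y}` as a bilinear map. -/
abbrev anti : Y →ₗ[K] Y →ₗ[K] Y := qComm (-1 : K)

theorem qComm_apply (q : K) (x y : Y) : qComm q x y = x * y - q • (y * x) := rfl

theorem qComm_swap {q : K} (hq : q * q = 1) (x y : Y) : qComm q y x = -(q • qComm q x y) := by
  rw [qComm_apply, qComm_apply, smul_sub, smul_smul, hq, one_smul, neg_sub]

theorem ad_swap (x y : Y) : ad K y x = -ad K x y := by
  rw [qComm_swap (mul_one 1), one_smul]

theorem anti_comm (x y : Y) : anti K x y = anti K y x := by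
  rw [qComm_swap (neg_mul_neg 1 1 |>.trans (mul_one 1)), neg_smul, one_smul, neg_neg]

theorem ad_eq_zero_iff {x y : Y} : ad K x y = 0 ↔ Commute x y := by
  rw [qComm_apply, one_smul, sub_eq_zero, commute_iff_eq]

theorem ad_qComm (q : K) (t x y : Y) :
    ad K t (qComm q x y) = qComm q (ad K t x) y + qComm q x (ad K t y) := by
  simp only [qComm_apply, mul_sub, sub_mul, smul_mul_assoc, mul_smul_comm, mul_assoc]
  module

theorem commute_ad {x y : Y} (h : Commute x y) :
    Commute (ad K x : Module.End K Y) (ad K y) := by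
  refine LinearMap.ext fun z => ?_
  rw [Module.End.mul_apply, Module.End.mul_apply, ad_qComm, ad_eq_zero_iff.2 h, map_zero,
    LinearMap.zero_apply, zero_add]

theorem ad_qComm_of_ad {t x x' y y' : Y} {α β : K} (q : K) (hx : ad K t x = α • x')
    (hy : ad K t y = β • y') : ad K t (qComm q x y) = α • qComm q x' y + β • qComm q x y' := by
  rw [ad_qComm, hx, hy, map_smul, map_smul, LinearMap.smul_apply]

theorem qComm_anti_left (q : K) (h x y : Y) :
    qComm q (anti K h x) y = anti K h (qComm q x y) + qComm (-q) x (ad K h y) := by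
  simp only [qComm_apply, mul_sub, sub_mul, smul_mul_assoc, mul_smul_comm, mul_assoc]
  module

theorem qComm_anti_right (q : K) (h x y : Y) :
    qComm q x (anti K h y) = anti K h (qComm q x y) - qComm (-q) (ad K h x) y := by
  simp only [qComm_apply, mul_sub, sub_mul, smul_mul_assoc, mul_smul_comm, mul_assoc]
  module

theorem ad_mul_self (h x : Y) : ad K (h * h) x = anti K h (ad K h x) := by
  simp only [qComm_apply, mul_sub, sub_mul, mul_smul_comm, smul_mul_assoc, mul_assoc]
  module

theorem qComm_qComm_of_qComm_eq_zero {y z : Y} {e : K} (he : e * e = 1) (hyz : qComm e y z = 0)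
    (f q : K) (x : Y) :
    qComm (f * e) (qComm q x y) z = e • qComm (e * q) (qComm f x z) y := by
  have hyz' : y * z = e • (z * y) := sub_eq_zero.1 hyz
  have hyzx : y * (z * x) = e • (z * (y * x)) := by
    rw [← mul_assoc, hyz', smul_mul_assoc, mul_assoc]
  simp only [qComm_apply, mul_sub, sub_mul, smul_mul_assoc, mul_smul_comm, mul_assoc, hyzx, hyz']
  match_scalars
  · ring1
  · linear_combination q * he
  · ring1
  · linear_combination (-(f * q * e)) * he

theorem qComm_op (q : K) (x y : Y) :
    qComm q (MulOpposite.op x) (MulOpposite.op y) = MulOpposite.op (qComm q y x) := rfl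

theorem ad_op_of_ad {x y z : Y} {α : K} (h : ad K x y = α • z) :
    ad K (MulOpposite.op x) (MulOpposite.op y) = (-α) • MulOpposite.op z := by
  rw [qComm_op, ad_swap, h, neg_smul]
  rfl

/-- The amount `[x_{r+1}, y_s] - [x_r, y_{s+1}] - b {x_r, y_s}` by which the quadratic relation
between the towers `x` and `y` fails in degrees `r` and `s`; the sign `q` is that of the bracket. -/
def mixedDefect (q b : K) (x y : ℕ → Y) (r s : ℕ) : Y :=
  qComm q (x (r + 1)) (y s) - qComm q (x r) (y (s + 1)) - b • qComm (-q) (x r) (y s)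

theorem ad_mixedDefect {t : Y} {α β : K} {x y : ℕ → Y} (q b : K)
    (hx : ∀ r, ad K t (x r) = α • x (r + 1)) (hy : ∀ s, ad K t (y s) = β • y (s + 1)) (r s : ℕ) :
    ad K t (mixedDefect q b x y r s)
      = α • mixedDefect q b x y (r + 1) s + β • mixedDefect q b x y r (s + 1) := by
  simp only [mixedDefect, map_sub, map_smul, ad_qComm_of_ad _ (hx _) (hy _)]
  module

theorem mixedDefect_eq_zero {t t' : Y} {α β : K} {x y : ℕ → Y} {q b : K}
    (hα : IsUnit α) (hx : ∀ r, ad K t (x r) = α • x (r + 1)) (hy : ∀ s, ad K t (y s) = 0)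
    (hβ : IsUnit β) (hx' : ∀ r, ad K t' (x r) = 0) (hy' : ∀ s, ad K t' (y s) = β • y (s + 1))
    (h00 : mixedDefect q b x y 0 0 = 0) (r s : ℕ) : mixedDefect q b x y r s = 0 := by
  have h0 : ∀ s, mixedDefect q b x y 0 s = 0 :=
    eq_zero_of_shift (D := ad K t') hβ h00 fun s => by
      rw [ad_mixedDefect q b (fun r => (hx' r).trans (zero_smul K (x (r + 1))).symm) hy',
        zero_smul, zero_add]
  exact eq_zero_of_shift (D := ad K t) hα (f := fun r => mixedDefect q b x y r s) (h0 s)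
    (fun r => by
      rw [ad_mixedDefect q b hx (fun s => (hy s).trans (zero_smul K (y (s + 1))).symm),
        zero_smul, add_zero]) r

theorem mixedDefect_op {q : K} (hq : q * q = 1) (b : K) (x y : ℕ → Y) (r s : ℕ) :
    mixedDefect q b (fun k => MulOpposite.op (x k)) (fun k => MulOpposite.op (y k)) r s
      = -(q • MulOpposite.op (mixedDefect q (-b) x y r s)) := by
  have hq' : -q * -q = 1 := by rw [neg_mul_neg, hq]
  simp only [mixedDefect, qComm_op, qComm_swap hq (x _) (y _), qComm_swap hq' (x _) (y _),
    MulOpposite.op_sub, MulOpposite.op_neg, MulOpposite.op_smul]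
  module

end TwistedCommutator

/-! ### Yangian systems -/

/-- Elements of an associative algebra `Y` satisfying the quadratic relations of the minimalistic
presentation of a super Yangian, the currents `x^±_{j,s}` of higher degree being obtained from those
of degree one by repeatedly bracketing with some `h̃_{k,1}`.  The Cartan matrix `a` has entries in
the ground ring, `ε i j` is the sign `(-1)^{p(i)p(j)}`, and `c` stands for `ℏ/2`. -/
structure YangianSystem {K I : Type*} [CommRing K] (c : K) (a ε : I → I → K) (Y : Type*) [Ring Y]
    [Algebra K Y] where
  /-- `h_{i,r}` for `r ∈ {0, 1}` -/
  h : I → Fin 2 → Y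
  /-- `h̃_{i,1}` -/
  T : I → Y
  /-- `x^+_{i,s}` -/
  xp : I → ℕ → Y
  /-- `x^-_{i,s}` -/
  xm : I → ℕ → Y
  a_symm : ∀ i j, a i j = a j i
  ε_symm : ∀ i j, ε i j = ε j i
  ε_mul_self : ∀ i j, ε i j * ε i j = 1
  h_comm : ∀ i j r s, Commute (h i r) (h j s)
  T_eq : ∀ i, T i = h i 1 - c • (h i 0 * h i 0)
  ad_h_xp_zero : ∀ i j, ad K (h i 0) (xp j 0) = a i j • xp j 0
  ad_h_xm_zero : ∀ i j, ad K (h i 0) (xm j 0) = (-a i j) • xm j 0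
  ad_T_xp_zero : ∀ i j, ad K (T i) (xp j 0) = a i j • xp j 1
  ad_T_xm_zero : ∀ i j, ad K (T i) (xm j 0) = (-a i j) • xm j 1
  exists_ad_T_xp_succ : ∀ j, ∃ k, IsUnit (a k j) ∧
    ∀ s, ad K (T k) (xp j (s + 1)) = a k j • xp j (s + 2)
  exists_ad_T_xm_succ : ∀ j, ∃ k, IsUnit (a k j) ∧
    ∀ s, ad K (T k) (xm j (s + 1)) = (-a k j) • xm j (s + 2)
  xp_xm_zero : ∀ i j, i ≠ j → qComm (ε i j) (xp i 0) (xm j 0) = 0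
  xp_xm_one_zero : ∀ i, qComm (ε i i) (xp i 1) (xm i 0) = h i 1
  xp_xm_zero_one : ∀ i, qComm (ε i i) (xp i 0) (xm i 1) = h i 1
  mixed_xp : ∀ i j, mixedDefect (ε i j) (c * a i j) (xp i) (xp j) 0 0 = 0
  mixed_xm : ∀ i j, mixedDefect (ε i j) (-(c * a i j)) (xm i) (xm j) 0 0 = 0

/-- Distinct nodes `i` and `j` of the diagram of `a`, each joined to a node not joined to the other,
so that the degrees of the currents at `i` and `j` can be shifted independently. -/
structure SeparatedNodes {K I : Type*} [CommRing K] (a : I → I → K) (i j : I) : Prop where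
  ne : i ≠ j
  left : ∃ k, IsUnit (a k i) ∧ a k j = 0
  right : ∃ k, IsUnit (a k j) ∧ a k i = 0

theorem SeparatedNodes.symm {K I : Type*} [CommRing K] {a : I → I → K} {i j : I}
    (h : SeparatedNodes a i j) : SeparatedNodes a j i :=
  ⟨h.ne.symm, h.right, h.left⟩

namespace YangianSystem

variable {K I Y : Type*} [CommRing K] [Ring Y] [Algebra K Y] {c : K} {a ε : I → I → K}
  (S : YangianSystem c a ε Y)

/-- The transpose of a Yangian system: the anti-automorphism exchanging `x^+` and `x^-` and fixing
the Cartan part, realized as a system in the opposite algebra.  It transports statements about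
`x^+` to statements about `x^-`. -/
def op : YangianSystem c a ε Yᵐᵒᵖ where
  h i r := .op (S.h i r)
  T i := .op (S.T i)
  xp i s := .op (S.xm i s)
  xm i s := .op (S.xp i s)
  a_symm := S.a_symm
  ε_symm := S.ε_symm
  ε_mul_self := S.ε_mul_self
  h_comm i j r s := (S.h_comm i j r s).op
  T_eq i := by rw [S.T_eq]; rfl
  ad_h_xp_zero i j := by simpa only [neg_neg] using ad_op_of_ad (S.ad_h_xm_zero i j)
  ad_h_xm_zero i j := ad_op_of_ad (S.ad_h_xp_zero i j)
  ad_T_xp_zero i j := by simpa only [neg_neg] using ad_op_of_ad (S.ad_T_xm_zero i j)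
  ad_T_xm_zero i j := ad_op_of_ad (S.ad_T_xp_zero i j)
  exists_ad_T_xp_succ j := by
    obtain ⟨k, hk, hT⟩ := S.exists_ad_T_xm_succ j
    exact ⟨k, hk, fun s => by simpa only [neg_neg] using ad_op_of_ad (hT s)⟩
  exists_ad_T_xm_succ j := by
    obtain ⟨k, hk, hT⟩ := S.exists_ad_T_xp_succ j
    exact ⟨k, hk, fun s => ad_op_of_ad (hT s)⟩
  xp_xm_zero i j hij := by
    rw [qComm_op, S.ε_symm, S.xp_xm_zero j i hij.symm, MulOpposite.op_zero]
  xp_xm_one_zero i := congrArg MulOpposite.op (S.xp_xm_zero_one i)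
  xp_xm_zero_one i := congrArg MulOpposite.op (S.xp_xm_one_zero i)
  mixed_xp i j := by
    rw [mixedDefect_op (S.ε_mul_self i j), S.mixed_xm, MulOpposite.op_zero, smul_zero, neg_zero]
  mixed_xm i j := by
    rw [mixedDefect_op (S.ε_mul_self i j), neg_neg, S.mixed_xp, MulOpposite.op_zero, smul_zero,
      neg_zero]

theorem commute_T_h (i j : I) (r : Fin 2) : Commute (S.T i) (S.h j r) := by
  rw [S.T_eq]
  exact (S.h_comm i j 1 r).sub_left
    (((S.h_comm i j 0 r).mul_left (S.h_comm i j 0 r)).smul_left c)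

theorem commute_T (i j : I) : Commute (S.T i) (S.T j) := by
  rw [S.T_eq j]
  exact (S.commute_T_h i j 1).sub_right
    (((S.commute_T_h i j 0).mul_right (S.commute_T_h i j 0)).smul_right c)

theorem ad_T_xp (i j : I) (s : ℕ) : ad K (S.T i) (S.xp j s) = a i j • S.xp j (s + 1) := by
  obtain ⟨k, hk, hT⟩ := S.exists_ad_T_xp_succ j
  have hshift : ∀ s, ad K (S.T k) (S.xp j s) = a k j • S.xp j (s + 1)
    | 0 => S.ad_T_xp_zero k j
    | s + 1 => hT s
  exact map_eq_smul_add_of_commute (commute_ad (S.commute_T k i)) hk hshift (S.ad_T_xp_zero i j) s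

theorem ad_h_xp (i j : I) (s : ℕ) : ad K (S.h i 0) (S.xp j s) = a i j • S.xp j s := by
  obtain ⟨k, hk, -⟩ := S.exists_ad_T_xp_succ j
  exact map_eq_smul_add_of_commute (k := 0) (commute_ad (S.commute_T_h k i 0)) hk (S.ad_T_xp k j)
    (S.ad_h_xp_zero i j) s

theorem ad_T_xm (i j : I) (s : ℕ) : ad K (S.T i) (S.xm j s) = (-a i j) • S.xm j (s + 1) := by
  have htr : ad K (S.xm j s) (S.T i) = a i j • S.xm j (s + 1) :=
    congrArg MulOpposite.unop (S.op.ad_T_xp i j s)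
  rw [ad_swap, htr, neg_smul]

theorem ad_h_xm (i j : I) (s : ℕ) : ad K (S.h i 0) (S.xm j s) = (-a i j) • S.xm j s := by
  have htr : ad K (S.xm j s) (S.h i 0) = a i j • S.xm j s :=
    congrArg MulOpposite.unop (S.op.ad_h_xp i j s)
  rw [ad_swap, htr, neg_smul]

theorem h_one_eq (i : I) : S.h i 1 = S.T i + c • (S.h i 0 * S.h i 0) := by
  rw [S.T_eq, sub_add_cancel]

theorem ad_h_one_xp (i j : I) (s : ℕ) : ad K (S.h i 1) (S.xp j s)
    = a i j • S.xp j (s + 1) + (c * a i j) • anti K (S.h i 0) (S.xp j s) := by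
  rw [S.h_one_eq, map_add, LinearMap.add_apply, S.ad_T_xp, map_smul, LinearMap.smul_apply,
    ad_mul_self, S.ad_h_xp, map_smul, smul_smul]

theorem ad_h_one_xm (i j : I) (s : ℕ) : ad K (S.h i 1) (S.xm j s)
    = -(a i j • S.xm j (s + 1) + (c * a i j) • anti K (S.h i 0) (S.xm j s)) := by
  rw [S.h_one_eq, map_add, LinearMap.add_apply, S.ad_T_xm, map_smul, LinearMap.smul_apply,
    ad_mul_self, S.ad_h_xm, map_smul]
  module

/-! #### The elements `[x^+_{i,r}, x^-_{i,s}]` -/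

/-- The bracket `u_{rs} = [x^+_{i,r}, x^-_{i,s}]`, expected to depend only on `r + s`. -/
def u (i : I) (r s : ℕ) : Y := qComm (ε i i) (S.xp i r) (S.xm i s)

theorem u_one_zero (i : I) : S.u i 1 0 = S.h i 1 := S.xp_xm_one_zero i

theorem u_zero_one (i : I) : S.u i 0 1 = S.h i 1 := S.xp_xm_zero_one i

theorem ad_T_u (k i : I) (r s : ℕ) :
    ad K (S.T k) (S.u i r s) = a k i • (S.u i (r + 1) s - S.u i r (s + 1)) := by
  rw [u, ad_qComm_of_ad _ (S.ad_T_xp k i r) (S.ad_T_xm k i s), u, u]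
  module

theorem ad_h_u (k i : I) (r s : ℕ) : ad K (S.h k 0) (S.u i r s) = 0 := by
  rw [u, ad_qComm_of_ad _ (S.ad_h_xp k i r) (S.ad_h_xm k i s), neg_smul, add_neg_cancel]

theorem u_two_zero_eq_u_one_one {i k : I} (hk : IsUnit (a k i)) : S.u i 2 0 = S.u i 1 1 := by
  rw [← sub_eq_zero, ← hk.smul_eq_zero, ← S.ad_T_u k i 1 0, u_one_zero,
    ad_eq_zero_iff.2 (S.commute_T_h k i 1)]

theorem u_one_one_eq_u_zero_two {i k : I} (hk : IsUnit (a k i)) : S.u i 1 1 = S.u i 0 2 := by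
  rw [← sub_eq_zero, ← hk.smul_eq_zero, ← S.ad_T_u k i 0 1, u_zero_one,
    ad_eq_zero_iff.2 (S.commute_T_h k i 1)]

/-- The obstruction `u_{21} - u_{12}` to the commutation of `h_{i,2}` with the `h_{j,1}`. -/
def defect (i : I) : Y := S.u i 2 1 - S.u i 1 2

theorem u_three_zero_sub_u_two_one {i k : I} (hk : IsUnit (a k i)) :
    S.u i 3 0 - S.u i 2 1 = S.defect i := by
  rw [defect, ← hk.smul_left_cancel, ← S.ad_T_u k i 2 0, ← S.ad_T_u k i 1 1,
    S.u_two_zero_eq_u_one_one hk]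

theorem ad_u_two_zero_h_one {i k : I} (hk : IsUnit (a k i)) (j : I) :
    ad K (S.u i 2 0) (S.h j 1) = -(a j i • S.defect i) := by
  rw [ad_swap, S.h_one_eq, map_add, LinearMap.add_apply, S.ad_T_u, map_smul, LinearMap.smul_apply,
    ad_mul_self, S.ad_h_u, map_zero, smul_zero, add_zero, S.u_three_zero_sub_u_two_one hk]

/-! #### Two neighbouring nodes -/

theorem xp_xm_eq_zero {i j l : I} (hij : i ≠ j) (hl : IsUnit (a l j)) (hl' : a l i = 0) (s : ℕ) :
    qComm (ε j i) (S.xp j s) (S.xm i 0) = 0 :=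
  eq_zero_of_shift hl (f := fun s => qComm (ε j i) (S.xp j s) (S.xm i 0))
    (S.xp_xm_zero j i hij.symm)
    (fun s => by
      rw [ad_qComm_of_ad _ (S.ad_T_xp l j s) (S.ad_T_xm l i 0), hl', neg_zero, zero_smul,
        add_zero]) s

theorem mixed_xp_eq_zero {i j : I} (hN : SeparatedNodes a i j) (r s : ℕ) :
    mixedDefect (ε i j) (c * a i j) (S.xp i) (S.xp j) r s = 0 := by
  obtain ⟨k, hki, hkj⟩ := hN.left
  obtain ⟨l, hlj, hli⟩ := hN.right
  exact mixedDefect_eq_zero hki (S.ad_T_xp k i) (fun s => by rw [S.ad_T_xp, hkj, zero_smul])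
    hlj (fun r => by rw [S.ad_T_xp, hli, zero_smul]) (S.ad_T_xp l j) (S.mixed_xp i j) r s

theorem ad_u_xp_sub {i j : I} (hN : SeparatedNodes a i j) (r s : ℕ) :
    ad K (S.u i (r + 1) 0) (S.xp j s) - ad K (S.u i r 0) (S.xp j (s + 1))
      = (c * a i j) • anti K (S.u i r 0) (S.xp j s) := by
  obtain ⟨l, hlj, hli⟩ := hN.right
  have hε := S.ε_mul_self i j
  have hpm (s : ℕ) : qComm (ε i j) (S.xp j s) (S.xm i 0) = 0 :=
    S.ε_symm i j ▸ S.xp_xm_eq_zero hN.ne hlj hli s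
  have hcomm (r s : ℕ) : qComm (ε i i * ε i j) (qComm (ε i j) (S.xp i r) (S.xp j s)) (S.xm i 0)
      = ε i j • ad K (S.u i r 0) (S.xp j s) := by
    rw [qComm_qComm_of_qComm_eq_zero hε (hpm s), hε, u]
  have hanti : qComm (ε i i * ε i j) (qComm (-ε i j) (S.xp i r) (S.xp j s)) (S.xm i 0)
      = ε i j • anti K (S.u i r 0) (S.xp j s) := by
    rw [qComm_qComm_of_qComm_eq_zero hε (hpm s), mul_neg, hε, u]
  have hmixed := congrArg (fun z => qComm (ε i i * ε i j) z (S.xm i 0)) (S.mixed_xp_eq_zero hN r s)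
  simp only [mixedDefect, map_sub, map_smul, LinearMap.sub_apply, LinearMap.smul_apply, map_zero,
    LinearMap.zero_apply, hcomm, hanti] at hmixed
  rw [smul_comm, ← smul_sub, ← smul_sub, (IsUnit.of_mul_eq_one _ hε).smul_eq_zero] at hmixed
  exact sub_eq_zero.1 hmixed

theorem ad_u_two_zero_xp {i j : I} (hN : SeparatedNodes a i j) (s : ℕ) :
    ad K (S.u i 2 0) (S.xp j s) = a i j • S.xp j (s + 2)
      + (c * a i j) • (anti K (S.h i 0) (S.xp j (s + 1))
        + anti K (S.h i 1) (S.xp j s)) := by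
  rw [sub_eq_iff_eq_add.1 (S.ad_u_xp_sub hN 1 s), u_one_zero, S.ad_h_one_xp]
  module

theorem ad_u_two_zero_xm {i j : I} (hN : SeparatedNodes a i j) (s : ℕ) :
    ad K (S.u i 2 0) (S.xm j s) = -(a i j • S.xm j (s + 2)
      + (c * a i j) • (anti K (S.h i 0) (S.xm j (s + 1))
        + anti K (S.h i 1) (S.xm j s))) := by
  obtain ⟨k, hki, -⟩ := hN.left
  have htr : ad K (S.xm j s) (S.u i 0 2) = a i j • S.xm j (s + 2)
      + (c * a i j) • (anti K (S.xm j (s + 1)) (S.h i 0) + anti K (S.xm j s) (S.h i 1)) :=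
    congrArg MulOpposite.unop (S.op.ad_u_two_zero_xp hN s)
  rw [S.u_two_zero_eq_u_one_one hki, S.u_one_one_eq_u_zero_two hki, ad_swap, htr,
    anti_comm (S.h i 0), anti_comm (S.h i 1)]

/-- The anticommutators in `ad_u_two_zero_xp` and `ad_u_two_zero_xm` cancel in the bracket with
`h_{j,1} = [x^+_{j,1}, x^-_{j,0}]`. -/
theorem anticomm_xp_xm_balance {j k : I} (hk : IsUnit (a k j)) (i : I) :
    qComm (ε j j) (anti K (S.h i 0) (S.xp j 2) + anti K (S.h i 1) (S.xp j 1))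
        (S.xm j 0)
      = qComm (ε j j) (S.xp j 1)
        (anti K (S.h i 0) (S.xm j 1) + anti K (S.h i 1) (S.xm j 0)) := by
  have hu : qComm (ε j j) (S.xp j 2) (S.xm j 0) = qComm (ε j j) (S.xp j 1) (S.xm j 1) :=
    S.u_two_zero_eq_u_one_one hk
  have hbal : qComm (-ε j j) (anti K (S.h i 0) (S.xp j 1)) (S.xm j 0)
      = qComm (-ε j j) (S.xp j 1) (anti K (S.h i 0) (S.xm j 0)) := by
    rw [qComm_anti_left, qComm_anti_right, neg_neg, ← sub_eq_zero, add_sub_sub_cancel,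
      add_comm, ← ad_qComm]
    exact S.ad_h_u i j 1 0
  simp only [map_add, LinearMap.add_apply, qComm_anti_left (ε j j),
    qComm_anti_right (ε j j), hu, S.ad_h_xp, S.ad_h_xm, S.ad_h_one_xp, S.ad_h_one_xm,
    map_smul, map_neg, LinearMap.smul_apply, hbal]
  module

theorem ad_u_two_zero_u_one_zero {i j : I} (hN : SeparatedNodes a i j) :
    ad K (S.u i 2 0) (S.u j 1 0) = (2 * a i j) • S.defect j := by
  obtain ⟨k, hkj, -⟩ := hN.right
  have h2 : S.u j 3 0 - S.u j 1 2 = (2 : K) • S.defect j := by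
    rw [two_smul]
    nth_rewrite 1 [← S.u_three_zero_sub_u_two_one hkj]
    rw [defect, sub_add_sub_cancel]
  have hu : S.u j 1 0 = qComm (ε j j) (S.xp j 1) (S.xm j 0) := rfl
  rw [mul_comm, mul_smul, ← h2, hu, ad_qComm, S.ad_u_two_zero_xp hN, S.ad_u_two_zero_xm hN,
    map_add, map_smul, LinearMap.add_apply, LinearMap.smul_apply, map_smul, LinearMap.smul_apply,
    S.anticomm_xp_xm_balance hkj i, map_neg, map_add (qComm _ _) (a i j • _), map_smul, map_smul,
    u, u]
  module

theorem defect_eq_neg_two_smul {i j : I} (hN : SeparatedNodes a i j) (hij : IsUnit (a i j)) :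
    S.defect i = -((2 : K) • S.defect j) := by
  obtain ⟨k, hki, -⟩ := hN.left
  have h := S.ad_u_two_zero_h_one hki j
  rw [← u_one_zero, S.ad_u_two_zero_u_one_zero hN, S.a_symm j i, mul_comm, mul_smul,
    ← smul_neg, hij.smul_left_cancel] at h
  rw [h, neg_neg]

theorem defect_eq_zero (h3 : IsUnit (3 : K)) {i j : I} (hN : SeparatedNodes a i j)
    (hij : IsUnit (a i j)) : S.defect i = 0 := by
  have hi := S.defect_eq_neg_two_smul hN hij
  have hj := S.defect_eq_neg_two_smul hN.symm (S.a_symm i j ▸ hij)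
  rw [← h3.smul_eq_zero]
  rw [hj] at hi
  linear_combination (norm := module) -hi

theorem ad_u_two_zero_h_one_eq_zero (h3 : IsUnit (3 : K)) {i k : I} (hN : SeparatedNodes a i k)
    (hik : IsUnit (a i k)) (j : I) : ad K (S.u i 2 0) (S.h j 1) = 0 := by
  rw [S.ad_u_two_zero_h_one (S.a_symm i k ▸ hik) j, S.defect_eq_zero h3 hN hik, smul_zero,
    neg_zero]

end YangianSystem

/-! ### The Cartan matrix -/

open Fin.NatCast Fin.CommRing in
theorem iterate_add_one_ne_self {N : ℕ} [NeZero N] (i : Fin N) {k : ℕ} (hk0 : 0 < k) (hk : k < N) :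
    (· + 1)^[k] i ≠ i := by
  rw [add_right_iterate, nsmul_one, ne_eq, add_eq_left, Fin.natCast_eq_zero]
  exact Nat.not_dvd_of_pos_of_lt hk0 hk

namespace SimpleRootSystem

variable {m n : ℕ}

theorem w_ne_zero (P : SimpleRootSystem m n) (i : Fin (m + n)) : P.w i ≠ 0 := by
  unfold w
  split_ifs <;> decide

variable [NeZero (m + n)] (P : SimpleRootSystem m n)

theorem a_comm (i j : Fin (m + n)) : P.a i j = P.a j i :=
  Finset.sum_congr rfl fun _ _ => mul_right_comm _ _ _

theorem a_eq (i j : Fin (m + n)) :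
    P.a i j = P.w i * coeffα j i - P.w (i + 1) * coeffα j (i + 1) := by
  simp only [a, coeffα.eq_1 i, mul_sub, sub_mul, mul_ite, ite_mul, mul_one, mul_zero, zero_mul,
    Finset.sum_sub_distrib, Finset.sum_ite_eq', Finset.mem_univ, if_true]

theorem a_succ_ne_zero (h3 : 3 ≤ m + n) (i : Fin (m + n)) : P.a i (i + 1) ≠ 0 := by
  have h1 (k : Fin (m + n)) : k + 1 ≠ k := iterate_add_one_ne_self k one_pos (by omega)
  have h2 : i + 1 + 1 ≠ i := iterate_add_one_ne_self i two_pos (by omega)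
  simp [a_eq, coeffα, (h1 _).symm, h2.symm, w_ne_zero]

theorem a_succ_succ_eq_zero (h4 : 4 ≤ m + n) (i : Fin (m + n)) : P.a i (i + 1 + 1) = 0 := by
  have h1 (k : Fin (m + n)) : k + 1 ≠ k := iterate_add_one_ne_self k one_pos (by omega)
  have h2 (k : Fin (m + n)) : k + 1 + 1 ≠ k := iterate_add_one_ne_self k two_pos (by omega)
  have h3 : i + 1 + 1 + 1 ≠ i := iterate_add_one_ne_self i three_pos (by omega)
  simp [a_eq, coeffα, (h1 _).symm, (h2 _).symm, h3.symm]

/-- The Cartan matrix of `P` with entries in `ℂ[ℏ]`. -/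
def cartan (i j : Fin (m + n)) : R := ((P.a i j : ℤ) : R)

theorem cartan_comm (i j : Fin (m + n)) : P.cartan i j = P.cartan j i := by
  rw [cartan, cartan, a_comm]

theorem isUnit_cartan {i j : Fin (m + n)} (h : P.a i j ≠ 0) : IsUnit (P.cartan i j) := by
  have hC : IsUnit ((P.a i j : ℤ) : ℂ) := isUnit_iff_ne_zero.2 (Int.cast_ne_zero.2 h)
  simpa only [cartan, map_intCast] using hC.map Polynomial.C

theorem isUnit_cartan_succ (h3 : 3 ≤ m + n) (i : Fin (m + n)) : IsUnit (P.cartan i (i + 1)) :=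
  P.isUnit_cartan (P.a_succ_ne_zero h3 i)

theorem acoef_mul_cartan (h3 : 3 ≤ m + n) (i : Fin (m + n)) :
    acoef P i * P.cartan (i + 1) i = 1 := by
  have h : ((P.a (i + 1) i : ℤ) : ℂ) ≠ 0 := by
    rw [a_comm]
    exact Int.cast_ne_zero.2 (P.a_succ_ne_zero h3 i)
  have hC : P.cartan (i + 1) i = Polynomial.C ((P.a (i + 1) i : ℤ) : ℂ) := (map_intCast _ _).symm
  rw [acoef, hC, ← Polynomial.C_mul, inv_mul_cancel₀ h, Polynomial.C_1]

theorem separatedNodes_succ (h4 : 4 ≤ m + n) (i : Fin (m + n)) :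
    SeparatedNodes P.cartan i (i + 1) where
  ne := (iterate_add_one_ne_self i one_pos (by omega)).symm
  left := by
    obtain ⟨k, rfl⟩ : ∃ k, k + 1 = i := ⟨i - 1, sub_add_cancel i 1⟩
    exact ⟨k, P.isUnit_cartan_succ (by omega) k, by
      rw [cartan, P.a_succ_succ_eq_zero h4, Int.cast_zero]⟩
  right := ⟨i + 1 + 1, by
    rw [cartan_comm]
    exact P.isUnit_cartan_succ (by omega) (i + 1), by
    rw [cartan, a_comm, P.a_succ_succ_eq_zero h4, Int.cast_zero]⟩

end SimpleRootSystem

/-! ### The minimalistic affine super Yangian -/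

theorem sg_comm (p q : Bool) : sg p q = sg q p := by
  rw [sg, sg, Bool.and_comm]

theorem sg_mul_self (p q : Bool) : sg p q * sg p q = 1 := by
  unfold sg
  split_ifs <;> ring

theorem sac_eq_qComm {Y : Type*} [Ring Y] [Algebra R Y] (p q : Bool) (x y : Y) :
    sac p q x y = qComm (-sg p q) x y := by
  rw [sac, qComm_apply, neg_smul, sub_neg_eq_add]

section Minimalistic

variable {m n : ℕ} [NeZero (m + n)] {P : SimpleRootSystem m n}

theorem mkY_eq_of_rel {x y : MFree m n} (h : MRel P x y) : mkY P x = mkY P y :=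
  RingQuot.mkAlgHom_rel R h

theorem mkY_sbr (p q : Bool) (x y : MFree m n) :
    mkY P (sbr p q x y) = qComm (sg p q) (mkY P x) (mkY P y) := by
  rw [sbr, map_sub, map_smul, map_mul, map_mul]
  rfl

theorem mkY_sac (p q : Bool) (x y : MFree m n) :
    mkY P (sac p q x y) = qComm (-sg p q) (mkY P x) (mkY P y) := by
  rw [sac, map_add, map_smul, map_mul, map_mul]
  exact sac_eq_qComm (Y := Ymin P) p q _ _

theorem qComm_mkY_of_rel {p q : Bool} {x y z : MFree m n} (h : MRel P (sbr p q x y) z) :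
    qComm (sg p q) (mkY P x) (mkY P y) = mkY P z :=
  (mkY_sbr p q x y).symm.trans (mkY_eq_of_rel h)

theorem mixedDefect_eq_zero_of_rel {p q : Bool} {b : R} {x x' y y' : MFree m n}
    (h : MRel P (sbr p q x' y - sbr p q x y') (b • sac p q x y)) {f g : ℕ → Ymin P}
    (hx : f 0 = mkY P x) (hx' : f 1 = mkY P x') (hy : g 0 = mkY P y) (hy' : g 1 = mkY P y') :
    mixedDefect (sg p q) b f g 0 0 = 0 := by
  have hrel := mkY_eq_of_rel h
  rw [map_sub, map_smul, mkY_sbr, mkY_sbr, mkY_sac, ← hx, ← hx', ← hy, ← hy'] at hrel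
  exact sub_eq_zero.2 hrel

variable (P)

/-- The generators and recursively defined higher generators of `Y_ℏ(ŝl(m|n,Π))`. -/
def yminSystem (h3 : 3 ≤ m + n) :
    YangianSystem (half * hbar) P.cartan (fun i j => sg (P.par i) (P.par j)) (Ymin P) where
  h := hg P
  T := htilY P
  xp := xpn P
  xm := xmn P
  a_symm := P.cartan_comm
  ε_symm _ _ := sg_comm _ _
  ε_mul_self _ _ := sg_mul_self _ _
  h_comm i j r s := ad_eq_zero_iff.1 ((qComm_mkY_of_rel (MRel.hh i j r s)).trans (map_zero _))
  T_eq i := by rw [htilY, MHt, map_sub, map_smul, map_mul]; rfl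
  ad_h_xp_zero i j := (qComm_mkY_of_rel (MRel.hxp i j 0)).trans (map_smul _ _ _)
  ad_h_xm_zero i j := (qComm_mkY_of_rel (MRel.hxm i j 0)).trans (map_smul _ _ _)
  ad_T_xp_zero i j := (qComm_mkY_of_rel (MRel.htxp i j)).trans (map_smul _ _ _)
  ad_T_xm_zero i j := (qComm_mkY_of_rel (MRel.htxm i j)).trans (map_smul _ _ _)
  exists_ad_T_xp_succ j := ⟨j + 1, P.cartan_comm j (j + 1) ▸ P.isUnit_cartan_succ h3 j, fun s => by
    rw [xpn, smul_smul, mul_comm, P.acoef_mul_cartan h3, one_smul]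
    rfl⟩
  exists_ad_T_xm_succ j := ⟨j + 1, P.cartan_comm j (j + 1) ▸ P.isUnit_cartan_succ h3 j, fun s => by
    rw [xmn, smul_smul, neg_mul_neg, mul_comm, P.acoef_mul_cartan h3, one_smul]
    rfl⟩
  xp_xm_zero i j hij := (qComm_mkY_of_rel (MRel.pm00 i j)).trans (by rw [if_neg hij, map_zero])
  xp_xm_one_zero i := (qComm_mkY_of_rel (MRel.pm10 i i)).trans (by rw [if_pos rfl]; rfl)
  xp_xm_zero_one i := (qComm_mkY_of_rel (MRel.pm01 i i)).trans (by rw [if_pos rfl]; rfl)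
  mixed_xp i j := mixedDefect_eq_zero_of_rel (MRel.mixp i j) rfl rfl rfl rfl
  mixed_xm i j := mixedDefect_eq_zero_of_rel (MRel.mixm i j) rfl rfl rfl rfl

end Minimalistic

theorem cartan_degree_two_commutes_general (m n : ℕ) [NeZero (m + n)] (h4 : 4 ≤ m + n)
    (P : SimpleRootSystem m n) (i j : Fin (m + n)) :
    sbr false false (hcn P i 2) (hcn P j 1) = 0 := by
  have h3 : IsUnit (3 : R) := by
    simpa only [map_ofNat] using (isUnit_iff_ne_zero.2 (three_ne_zero' ℂ)).map Polynomial.C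
  exact (yminSystem P (by omega)).ad_u_two_zero_h_one_eq_zero h3 (P.separatedNodes_succ h4 i)
    (P.isUnit_cartan_succ (by omega) i) j

/-- In the minimalistic affine super Yangian `Y_ℏ(ŝl(m|n,Π))` with
recursively defined higher generators: if `α_i` is an odd simple root and `α_j` is a simple
root with `(α_i, α_j) ≠ 0`, then `[h_{α_j,2}, h_{α_j,1}] = 0`; likewise
`[h_{α_i,2}, h_{α_i,1}] = 0` holds for every even simple root `α_i`. -/
theorem cartan_degree_two_commutes (m n : ℕ) [NeZero (m + n)]
    (hm : 2 ≤ m) (hn : 2 ≤ n) (hmn : m ≠ n)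
    (P : SimpleRootSystem m n) :
    (∀ i j : Fin (m + n), P.par i = true → P.a i j ≠ 0 →
      sbr false false (hcn P j 2) (hcn P j 1) = 0) ∧
    (∀ i : Fin (m + n), P.par i = false →
      sbr false false (hcn P i 2) (hcn P i 1) = 0) := by
  have h := cartan_degree_two_commutes_general m n (by omega) P
  exact ⟨fun _ j _ _ => h j j, fun i _ => h i i⟩

end ASY
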